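/- arXiv:2208.00582 — 2 statements merged into one kernel-verified Lean document; each statement's English description precedes it below -/
import Mathlib

section
/- (Comparison lemma; Guaraco–Marques–Neves.) Fix ε > 0, a double-well potential W, and n ≥ 1. Let Ω ⊆ ℝ^n be a bounded open connected set with closure Ω̄. Let u, v : Ω̄ → [−1, 1] be continuous functions that are smooth on Ω and satisfy ε² Δu = W'(u) and ε² Δv = W'(v) on Ω. If u > 0 everywhere on Ω̄ and v = 0 on the boundary ∂Ω, then u > v everywhere on Ω̄. -/
open Real Filter Set

/-- `W` is a double-well potential. -/
structure IsDoubleWell (W : ℝ → ℝ) : Prop where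
  smooth : ContDiff ℝ (⊤ : ℕ∞) W
  nonneg : ∀ x, 0 ≤ W x
  eq_zero_iff : ∀ x, W x = 0 ↔ x = 1 ∨ x = -1
  even : ∀ x, W (-x) = W x
  deriv2_pos_one : 0 < iteratedDeriv 2 W 1
  deriv2_pos_neg_one : 0 < iteratedDeriv 2 W (-1)
  mono : StrictMonoOn (fun x => deriv W x / x) (Set.Ioo (0 : ℝ) 1)
  anti : StrictAntiOn (fun x => deriv W x / x) (Set.Ioo (-1 : ℝ) 0)

/-- Second derivative of `u` at `x` in the `j`-th coordinate direction. -/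
noncomputable def secondDirDeriv {d : ℕ} (u : EuclideanSpace ℝ (Fin d) → ℝ)
    (x : EuclideanSpace ℝ (Fin d)) (j : Fin d) : ℝ :=
  iteratedDeriv 2 (fun t : ℝ => u (x + t • EuclideanSpace.single j 1)) 0

/-- Euclidean Laplacian `Δu = Σ_j ∂²u/∂x_j²`. -/
noncomputable def lap {d : ℕ} (u : EuclideanSpace ℝ (Fin d) → ℝ)
    (x : EuclideanSpace ℝ (Fin d)) : ℝ :=
  ∑ j : Fin d, secondDirDeriv u x j

lemma cmp_line_contDiffAt {n : ℕ} {u : EuclideanSpace ℝ (Fin n) → ℝ} {x : EuclideanSpace ℝ (Fin n)}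
    (hu : ContDiffAt ℝ 2 u x) (j : Fin n) :
    ContDiffAt ℝ 2 (fun t : ℝ => u (x + t • EuclideanSpace.single j 1)) 0 := by
  have h : ContDiffAt ℝ 2 u (x + (0 : ℝ) • EuclideanSpace.single j (1 : ℝ)) := by simpa using hu
  exact ContDiffAt.comp (0 : ℝ) h (by fun_prop)

lemma cmp_second_deriv_nonneg {f : ℝ → ℝ} (hf : ContDiffAt ℝ 2 f 0) (hm : IsLocalMin f 0) :
    0 ≤ iteratedDeriv 2 f 0 := by
  by_contra hneg
  push Not at hneg
  have h0 : deriv f 0 = 0 := hm.deriv_eq_zero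
  have h2 : iteratedDeriv 2 f 0 = deriv (deriv f) 0 := by
    rw [iteratedDeriv_succ, iteratedDeriv_one]
  have hmax : IsLocalMax f 0 :=
    isLocalMax_of_deriv_deriv_neg (by rw [← h2]; exact hneg) h0 hf.continuousAt
  have hc : f =ᶠ[nhds 0] fun _ => f 0 := by
    filter_upwards [hm, hmax] with y h1 h2
    exact le_antisymm h2 h1
  have : iteratedDeriv 2 f 0 = iteratedDeriv 2 (fun _ : ℝ => f 0) 0 :=
    hc.iteratedDeriv_eq 2
  rw [this] at hneg
  simp [iteratedDeriv_succ] at hneg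

lemma cmp_lap_add {n : ℕ} {u v : EuclideanSpace ℝ (Fin n) → ℝ} {x : EuclideanSpace ℝ (Fin n)}
    (hu : ContDiffAt ℝ 2 u x) (hv : ContDiffAt ℝ 2 v x) :
    lap (fun y => u y + v y) x = lap u x + lap v x := by
  unfold lap
  rw [← Finset.sum_add_distrib]
  refine Finset.sum_congr rfl fun j _ => ?_
  unfold secondDirDeriv
  exact iteratedDeriv_fun_add (cmp_line_contDiffAt hu j) (cmp_line_contDiffAt hv j)

lemma cmp_lap_mul {n : ℕ} {u : EuclideanSpace ℝ (Fin n) → ℝ} {x : EuclideanSpace ℝ (Fin n)}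
    (c : ℝ) (hu : ContDiffAt ℝ 2 u x) :
    lap (fun y => c * u y) x = c * lap u x := by
  unfold lap
  rw [Finset.mul_sum]
  refine Finset.sum_congr rfl fun j _ => ?_
  unfold secondDirDeriv
  exact iteratedDeriv_const_mul c (cmp_line_contDiffAt hu j)

lemma cmp_lap_nonneg {n : ℕ} {u : EuclideanSpace ℝ (Fin n) → ℝ} {x : EuclideanSpace ℝ (Fin n)}
    (hu : ContDiffAt ℝ 2 u x) (hm : IsLocalMin u x) : 0 ≤ lap u x := by
  unfold lap
  refine Finset.sum_nonneg fun j _ => ?_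
  refine cmp_second_deriv_nonneg (cmp_line_contDiffAt hu j) ?_
  have ht : Tendsto (fun t : ℝ => x + t • EuclideanSpace.single j (1 : ℝ)) (nhds 0) (nhds x) := by
    have : Continuous (fun t : ℝ => x + t • EuclideanSpace.single j (1 : ℝ)) := by fun_prop
    simpa using this.tendsto 0
  have := ht.eventually hm
  simpa [IsLocalMin, IsMinFilter] using this

lemma cmp_lap_exp {n : ℕ} (i : Fin n) (k a : ℝ) (x : EuclideanSpace ℝ (Fin n)) :
    lap (fun y => k * exp (a * y i)) x = a ^ 2 * (k * exp (a * x i)) := by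
  unfold lap
  rw [Finset.sum_eq_single i]
  · unfold secondDirDeriv
    have h1 : ∀ t : ℝ, HasDerivAt (fun t : ℝ => k * exp (a * (x i + t)))
        (k * (exp (a * (x i + t)) * a)) t := fun t => by
      have h := (((hasDerivAt_id t).const_add (x i)).const_mul a).exp.const_mul k
      simpa using h
    have h2 : ∀ t : ℝ, HasDerivAt (fun t : ℝ => k * (exp (a * (x i + t)) * a))
        (k * (exp (a * (x i + t)) * a * a)) t := fun t => by
      have h := ((((hasDerivAt_id t).const_add (x i)).const_mul a).exp.mul_const a).const_mul k
      simpa using h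
    have e : (fun t : ℝ => k * exp (a * (x + t • EuclideanSpace.single i (1 : ℝ)) i))
        = fun t => k * exp (a * (x i + t)) := by
      ext t; simp
    rw [e, iteratedDeriv_succ, iteratedDeriv_one, funext fun t => (h1 t).deriv, (h2 0).deriv]
    simp; ring
  · intro j _ hj
    unfold secondDirDeriv
    have e : (fun t : ℝ => k * exp (a * (x + t • EuclideanSpace.single j (1 : ℝ)) i))
        = fun t => k * exp (a * x i) := by
      ext t; simp [hj.symm]
    rw [e]
    simp [iteratedDeriv_succ]
  · simp

lemma cmp_ratio {W : ℝ → ℝ} (hW : IsDoubleWell W) {p q : ℝ} (hp : 0 < p) (hpq : p < q)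
    (hq : q ≤ 1) : deriv W p / p < deriv W q / q := by
  obtain ⟨r, hpr, hrq⟩ := exists_between hpq
  have h1 : deriv W p / p < deriv W r / r :=
    hW.mono ⟨hp, by linarith⟩ ⟨by linarith, by linarith⟩ hpr
  refine h1.trans_le ?_
  have hc : Continuous (deriv W) := hW.smooth.continuous_deriv (WithTop.coe_le_coe.2 (le_top : (1 : ℕ∞) ≤ ⊤))
  have hca : ContinuousAt (fun x => deriv W x / x) q :=
    hc.continuousAt.div continuousAt_id (hp.trans hpq).ne'
  have ht : Tendsto (fun x => deriv W x / x) (nhdsWithin q (Iio q)) (nhds (deriv W q / q)) :=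
    hca.tendsto.mono_left nhdsWithin_le_nhds
  refine ge_of_tendsto ht ?_
  filter_upwards [Ioo_mem_nhdsLT hrq] with s hs
  exact (hW.mono ⟨by linarith, by linarith⟩ ⟨by linarith [hs.1], by linarith [hs.2]⟩ hs.1).le

lemma cmp_lipschitz {W : ℝ → ℝ} (hW : IsDoubleWell W) :
    ∃ L : ℝ, 0 < L ∧ ∀ p q : ℝ, -1 ≤ p → p ≤ q → q ≤ 1 →
      deriv W q - deriv W p ≤ L * (q - p) := by
  have hd : ContDiff ℝ 1 (deriv W) := by
    have h2 : ContDiff ℝ 2 W := hW.smooth.of_le (WithTop.coe_le_coe.2 (le_top : (2 : ℕ∞) ≤ ⊤))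
    exact ((contDiff_succ_iff_deriv (n := 1)).1 h2).2.2
  obtain ⟨C, hC⟩ := (isCompact_Icc (a := (-1 : ℝ)) (b := 1)).exists_bound_of_continuousOn
    (hd.continuous_deriv le_rfl).continuousOn
  have hC0 : 0 ≤ C := (norm_nonneg _).trans (hC 0 (by norm_num))
  refine ⟨C + 1, by linarith, fun p q hp hpq hq => ?_⟩
  have h := (convex_Icc (-1 : ℝ) 1).norm_image_sub_le_of_norm_deriv_le (f := deriv W)
    (fun x _ => (hd.differentiable one_ne_zero).differentiableAt) hC
    (x := p) (y := q) ⟨hp, by linarith⟩ ⟨by linarith, hq⟩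
  rw [Real.norm_eq_abs, Real.norm_eq_abs, abs_of_nonneg (by linarith : 0 ≤ q - p)] at h
  nlinarith [le_abs_self (deriv W q - deriv W p)]

/-- **Guaraco–Marques–Neves comparison lemma.** On a bounded open connected
`Ω ⊆ ℝⁿ`, if `u, v : Ω̄ → [-1,1]` are continuous on `Ω̄`, smooth solutions of
`ε² Δw = W'(w)` on `Ω`, `u > 0` on `Ω̄` and `v = 0` on `∂Ω`, then `u > v` on `Ω̄`. -/
theorem phase_transition_comparison
    {ε : ℝ} (hε : 0 < ε) {W : ℝ → ℝ} (hW : IsDoubleWell W) {n : ℕ} (hn : 1 ≤ n)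
    (Ω : Set (EuclideanSpace ℝ (Fin n)))
    (hΩ_bdd : Bornology.IsBounded Ω) (hΩ_open : IsOpen Ω) (hΩ_conn : IsConnected Ω)
    (u v : EuclideanSpace ℝ (Fin n) → ℝ)
    (hu_cont : ContinuousOn u (closure Ω)) (hv_cont : ContinuousOn v (closure Ω))
    (hu_smooth : ContDiffOn ℝ (⊤ : ℕ∞) u Ω) (hv_smooth : ContDiffOn ℝ (⊤ : ℕ∞) v Ω)
    (hu_mem : ∀ x ∈ closure Ω, u x ∈ Set.Icc (-1 : ℝ) 1)
    (hv_mem : ∀ x ∈ closure Ω, v x ∈ Set.Icc (-1 : ℝ) 1)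
    (hu_pde : ∀ x ∈ Ω, ε ^ 2 * lap u x = deriv W (u x))
    (hv_pde : ∀ x ∈ Ω, ε ^ 2 * lap v x = deriv W (v x))
    (hu_pos : ∀ x ∈ closure Ω, 0 < u x)
    (hv_bdry : ∀ x ∈ frontier Ω, v x = 0) :
    ∀ x ∈ closure Ω, v x < u x := by
  have hK : IsCompact (closure Ω) := hΩ_bdd.isCompact_closure
  have hne : (closure Ω).Nonempty := hΩ_conn.nonempty.closure
  have hsub : Ω ⊆ closure Ω := subset_closure
  have hu2 : ∀ x ∈ Ω, ContDiffAt ℝ 2 u x := fun x hx =>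
    (hu_smooth.contDiffAt (hΩ_open.mem_nhds hx)).of_le (WithTop.coe_le_coe.2 (le_top : (2 : ℕ∞) ≤ ⊤))
  have hv2 : ∀ x ∈ Ω, ContDiffAt ℝ 2 v x := fun x hx =>
    (hv_smooth.contDiffAt (hΩ_open.mem_nhds hx)).of_le (WithTop.coe_le_coe.2 (le_top : (2 : ℕ∞) ≤ ⊤))
  have hcases : ∀ x ∈ closure Ω, x ∈ Ω ∨ x ∈ frontier Ω := fun x hx => by
    by_cases h : x ∈ Ω
    · exact Or.inl h
    · right; rw [hΩ_open.frontier_eq]; exact ⟨hx, h⟩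
  have hε2 : 0 < ε ^ 2 := by positivity
  -- Step 1: weak comparison
  have hle : ∀ x ∈ closure Ω, v x ≤ u x := by
    by_contra hcon
    push Not at hcon
    obtain ⟨z, hz, hzlt⟩ := hcon
    obtain ⟨x, hx, hmax⟩ := hK.exists_isMaxOn hne
      (hv_cont.div hu_cont fun y hy => (hu_pos y hy).ne')
    obtain ⟨M, hM⟩ : ∃ M, M = v x / u x := ⟨_, rfl⟩
    have hmax' : ∀ y ∈ closure Ω, v y ≤ M * u y := fun y hy => by
      have h : v y / u y ≤ M := by rw [hM]; exact hmax hy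
      exact (div_le_iff₀ (hu_pos y hy)).1 h
    have hux := hu_pos x hx
    have hM1 : 1 < M := by
      have h1 := hmax' z hz
      have h2 := hu_pos z hz
      by_contra h
      push Not at h
      nlinarith
    have hvx : v x = M * u x := by rw [hM]; field_simp
    have hvpos : 0 < v x := by rw [hvx]; positivity
    rcases hcases x hx with hxΩ | hxb
    swap
    · rw [hv_bdry x hxb] at hvpos; exact lt_irrefl _ hvpos
    have hmin : IsLocalMin (fun y => M * u y + (-1) * v y) x := by
      filter_upwards [hΩ_open.mem_nhds hxΩ] with y hy
      have := hmax' y (hsub hy)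
      linarith
    have hl := cmp_lap_nonneg (((contDiffAt_const).mul (hu2 x hxΩ)).add
      ((contDiffAt_const).mul (hv2 x hxΩ))) hmin
    rw [cmp_lap_add ((contDiffAt_const).mul (hu2 x hxΩ)) ((contDiffAt_const).mul (hv2 x hxΩ)),
      cmp_lap_mul _ (hu2 x hxΩ), cmp_lap_mul _ (hv2 x hxΩ)] at hl
    have hineq : deriv W (v x) ≤ M * deriv W (u x) := by
      rw [← hu_pde x hxΩ, ← hv_pde x hxΩ]
      nlinarith
    have hr := cmp_ratio hW hux (show u x < v x by rw [hvx]; nlinarith) (hv_mem x hx).2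
    rw [div_lt_div_iff₀ hux hvpos] at hr
    have h3 : deriv W (v x) * u x ≤ M * deriv W (u x) * u x :=
      mul_le_mul_of_nonneg_right hineq hux.le
    have h4 : deriv W (u x) * v x = M * deriv W (u x) * u x := by rw [hvx]; ring
    linarith
  -- Step 2: strict comparison via an exponential barrier
  obtain ⟨L, hL0, hL⟩ := cmp_lipschitz hW
  obtain ⟨x₀, hx₀, hδ⟩ := hK.exists_isMinOn hne hu_cont
  have hδpos := hu_pos x₀ hx₀
  obtain ⟨R, hR⟩ := hK.isBounded.exists_norm_le
  let i : Fin n := ⟨0, hn⟩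
  obtain ⟨a, ha⟩ : ∃ a : ℝ, a = √L / ε := ⟨_, rfl⟩
  have ha0 : 0 ≤ a := by rw [ha]; positivity
  have ha2 : ε ^ 2 * a ^ 2 = L := by
    rw [ha, div_pow, Real.sq_sqrt hL0.le]; field_simp
  obtain ⟨k, hk⟩ : ∃ k : ℝ, k = u x₀ * exp (-(a * R)) := ⟨_, rfl⟩
  have hkpos : 0 < k := by rw [hk]; positivity
  have hφpos : ∀ y : EuclideanSpace ℝ (Fin n), 0 < k * exp (a * y i) := fun y => by positivity
  have hφle : ∀ y ∈ closure Ω, k * exp (a * y i) ≤ u y := fun y hy => by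
    have h1 : y i ≤ R := (le_abs_self _).trans ((PiLp.norm_apply_le y i).trans (hR y hy))
    have h2 : exp (-(a * R)) * exp (a * y i) ≤ 1 := by
      rw [← Real.exp_add, Real.exp_le_one_iff]
      nlinarith [mul_le_mul_of_nonneg_left h1 ha0]
    have h3 : u x₀ ≤ u y := hδ hy
    rw [hk, mul_assoc]
    nlinarith
  have hφ2 : ∀ x : EuclideanSpace ℝ (Fin n),
      ContDiffAt ℝ 2 (fun y : EuclideanSpace ℝ (Fin n) => k * exp (a * y i)) x := fun x => by
    fun_prop
  obtain ⟨x, hx, hmin⟩ := hK.exists_isMinOn hne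
    (f := fun y => u y + (-1) * (v y + k * exp (a * y i)))
    (hu_cont.add (continuousOn_const.mul (hv_cont.add
      (by fun_prop : Continuous fun y : EuclideanSpace ℝ (Fin n) => k * exp (a * y i)).continuousOn)))
  have hge : 0 ≤ u x + (-1) * (v x + k * exp (a * x i)) := by
    by_contra hneg
    push Not at hneg
    rcases hcases x hx with hxΩ | hxb
    swap
    · rw [hv_bdry x hxb] at hneg
      linarith [hφle x hx]
    have hloc : IsLocalMin (fun y => u y + (-1) * (v y + k * exp (a * y i))) x := by
      filter_upwards [hΩ_open.mem_nhds hxΩ] with y hy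
      exact hmin (hsub hy)
    have hvφ := (hv2 x hxΩ).add (hφ2 x)
    have hl := cmp_lap_nonneg ((hu2 x hxΩ).add ((contDiffAt_const).mul hvφ)) hloc
    rw [cmp_lap_add (hu2 x hxΩ) ((contDiffAt_const).mul hvφ), cmp_lap_mul _ hvφ,
      cmp_lap_add (hv2 x hxΩ) (hφ2 x), cmp_lap_exp] at hl
    have hl2 := mul_nonneg hε2.le hl
    have hlip := hL (v x) (u x) (hv_mem x hx).1 (hle x hx) (hu_mem x hx).2
    rw [← hu_pde x hxΩ, ← hv_pde x hxΩ] at hlip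
    have e : ε ^ 2 * (a ^ 2 * (k * exp (a * x i))) = L * (k * exp (a * x i)) := by
      rw [← ha2]; ring
    nlinarith [mul_pos hL0 (neg_pos.2 hneg)]
  intro y hy
  have h1 : u x + (-1) * (v x + k * exp (a * x i)) ≤ u y + (-1) * (v y + k * exp (a * y i)) :=
    hmin hy
  linarith [hφpos y]
end

section
/- (Energy comparison ruling out the zero minimizer.) Fix ℓ > 0 and a double-well potential W, and for ε > 0 and a Lipschitz function v : [−ℓ, ℓ] → ℝ define E_ε(v) := ∫_{−ℓ}^{ℓ} ( (ε/2) v'(t)² + ε^{−1} W(v(t)) ) dt. Then there exists ε₀ > 0, depending on ℓ and W, such that for every ε ∈ (0, ε₀) there is a Lipschitz function v : [−ℓ, ℓ] → [0, 1] with v(−ℓ) = v(ℓ) = 0 and E_ε(v) < E_ε(0) = 2ℓ W(0)/ε. -/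
open Real Filter Set

theorem IsDoubleWell.strictAntiOn_Icc {W : ℝ → ℝ} (hW : IsDoubleWell W) :
    StrictAntiOn W (Set.Icc (0 : ℝ) 1) := by
  have hc : Continuous W := hW.smooth.continuous
  apply strictAntiOn_of_deriv_neg (convex_Icc 0 1) hc.continuousOn
  rw [interior_Icc]
  intro x hx
  by_contra hn
  have hn' : 0 ≤ deriv W x := not_lt.mp hn
  have hm : StrictMonoOn W (Set.Icc x 1) := by
    apply strictMonoOn_of_deriv_pos (convex_Icc x 1) hc.continuousOn
    rw [interior_Icc]
    intro y hy
    have hy0 : 0 < y := hx.1.trans hy.1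
    have h1 : deriv W x / x < deriv W y / y := hW.mono hx ⟨hy0, hy.2⟩ hy.1
    have h2 : 0 ≤ deriv W x / x := div_nonneg hn' hx.1.le
    have h3 : 0 < deriv W y / y := lt_of_le_of_lt h2 h1
    exact (div_pos_iff_of_pos_right hy0).mp h3
  have h4 : W x < W 1 := hm ⟨le_refl x, hx.2.le⟩ ⟨hx.2.le, le_refl 1⟩ hx.2
  have h5 : W 1 = 0 := (hW.eq_zero_iff 1).2 (Or.inl rfl)
  linarith [hW.nonneg x]

/-- **Energy comparison ruling out the zero minimizer.** For small enough
`ε > 0` there is a Lipschitz `v : [-ℓ, ℓ] → [0, 1]` vanishing at `±ℓ` with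
`E_ε(v) = ∫ (ε/2) v'² + ε⁻¹ W(v) < E_ε(0) = 2ℓ W(0)/ε`. -/
theorem energy_comparison_zero_not_minimizer
    {ℓ : ℝ} (hℓ : 0 < ℓ) {W : ℝ → ℝ} (hW : IsDoubleWell W) :
    ∃ ε₀ > 0, ∀ ε : ℝ, ε ∈ Set.Ioo 0 ε₀ →
      ∃ (v : ℝ → ℝ) (K : NNReal), LipschitzWith K v ∧
        (∀ t ∈ Set.Icc (-ℓ) ℓ, v t ∈ Set.Icc (0 : ℝ) 1) ∧
        v (-ℓ) = 0 ∧ v ℓ = 0 ∧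
        (∫ t in (-ℓ)..ℓ, (ε / 2 * (deriv v t) ^ 2 + ε⁻¹ * W (v t)))
          < 2 * ℓ * W 0 / ε := by
  have hc : Continuous W := hW.smooth.continuous
  have hanti := hW.strictAntiOn_Icc
  obtain ⟨a, ha⟩ : ∃ a : ℝ, a = π / (2 * ℓ) := ⟨_, rfl⟩
  have ha0 : 0 < a := by rw [ha]; positivity
  have haℓ : a * ℓ = π / 2 := by rw [ha]; field_simp
  have hd : ∀ t : ℝ, HasDerivAt (fun t : ℝ => cos (a * t)) (-sin (a * t) * a) t := by
    intro t
    have h := ((hasDerivAt_id t).const_mul a).cos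
    simpa using h
  have hrange : ∀ t ∈ Set.Icc (-ℓ) ℓ, cos (a * t) ∈ Set.Icc (0 : ℝ) 1 := by
    intro t ht
    refine ⟨cos_nonneg_of_mem_Icc ⟨?_, ?_⟩, cos_le_one _⟩
    · nlinarith [ht.1]
    · nlinarith [ht.2]
  have hW0 : ∀ x ∈ Set.Icc (0 : ℝ) 1, W x ≤ W 0 := fun x hx =>
    hanti.antitoneOn ⟨le_refl _, zero_le_one⟩ hx hx.1
  obtain ⟨C, hC⟩ : ∃ C : ℝ, C = ∫ t in (-ℓ)..ℓ, (-sin (a * t) * a) ^ 2 := ⟨_, rfl⟩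
  obtain ⟨D, hD⟩ : ∃ D : ℝ, D = ∫ t in (-ℓ)..ℓ, W (cos (a * t)) := ⟨_, rfl⟩
  have hC0 : 0 ≤ C := by
    rw [hC]
    exact intervalIntegral.integral_nonneg (by linarith) (fun t _ => sq_nonneg _)
  have hDlt : D < 2 * ℓ * W 0 := by
    have h : D < ∫ _t in (-ℓ)..ℓ, W 0 := by
      rw [hD]
      apply intervalIntegral.integral_lt_integral_of_continuousOn_of_le_of_exists_lt
        (by linarith) (by fun_prop) (by fun_prop)
      · intro t ht
        exact hW0 _ (hrange t ⟨ht.1.le, ht.2⟩)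
      · refine ⟨0, ⟨by linarith, hℓ.le⟩, ?_⟩
        simp only [mul_zero, cos_zero]
        exact hanti ⟨le_refl _, zero_le_one⟩ ⟨zero_le_one, le_refl _⟩ zero_lt_one
    rw [intervalIntegral.integral_const, smul_eq_mul] at h
    linarith
  refine ⟨min 1 ((2 * ℓ * W 0 - D) / (C + 1)),
    lt_min one_pos (div_pos (by linarith) (by linarith)), ?_⟩
  rintro ε ⟨hε, hε'⟩
  have hε1 : ε < 1 := hε'.trans_le (min_le_left _ _)
  have hε2 : ε * (C + 1) < 2 * ℓ * W 0 - D :=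
    (lt_div_iff₀ (by linarith)).mp (hε'.trans_le (min_le_right _ _))
  refine ⟨fun t => cos (a * t), a.toNNReal, ?_, hrange, ?_, ?_, ?_⟩
  · apply lipschitzWith_of_nnnorm_deriv_le (fun t => (hd t).differentiableAt)
    intro t
    rw [(hd t).deriv, ← NNReal.coe_le_coe]
    simp only [coe_nnnorm, Real.coe_toNNReal a ha0.le, Real.norm_eq_abs, abs_mul, abs_neg, abs_of_pos ha0]
    nlinarith [abs_sin_le_one (a * t)]
  · simp [haℓ]
  · simp [haℓ]
  · have h1 : (∫ t in (-ℓ)..ℓ, (ε / 2 * (deriv (fun t : ℝ => cos (a * t)) t) ^ 2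
        + ε⁻¹ * W (cos (a * t)))) = ε / 2 * C + ε⁻¹ * D := by
      simp only [fun t => (hd t).deriv]
      rw [intervalIntegral.integral_add, intervalIntegral.integral_const_mul,
        intervalIntegral.integral_const_mul, hC, hD]
      · exact Continuous.intervalIntegrable (by fun_prop) _ _
      · exact Continuous.intervalIntegrable (by fun_prop) _ _
    rw [h1, lt_div_iff₀ hε]
    have h2 : (ε / 2 * C + ε⁻¹ * D) * ε = ε * ε * C / 2 + D := by field_simp
    rw [h2]
    have h3 : ε * ε * C ≤ ε * C := by
      have := mul_nonneg hε.le hC0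
      nlinarith
    nlinarith [mul_nonneg hε.le hC0]
end
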